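/- arXiv:1312.6224 — 8 statements merged into one kernel-verified Lean document; each statement's English description precedes it below -/
import Mathlib

section
/- Let d ≥ 1, K > 0, and let u, v : ℝ^d → [0,∞) be measurable functions that are both integrable and square-integrable. Then ∑_{i=0}^∞ (1/(i!·K^i)) ∫_{(ℝ^d)^i} ( e^{-⟨u,1⟩} ∏_{j=1}^i K·u(x_j) ) · ( e^{-⟨v,1⟩} ∏_{j=1}^i K·v(x_j) ) d(x_1,…,x_i) = exp( K·⟨u,v⟩ − ⟨u,1⟩ − ⟨v,1⟩ ). In other words, the μ-inner product of the probability densities of two Poisson point processes with intensity functions u and v equals exp(K⟨u,v⟩ − ⟨u,1⟩ − ⟨v,1⟩). -/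
/-!
The integrand on `i`-point configurations is a constant times `∏ j, u (x j) * v (x j)`, so
Fubini turns its integral into `exp (-⟨u,1⟩ - ⟨v,1⟩) * K ^ (2 * i) * ⟨u,v⟩ ^ i`. After division by
`i! * K ^ i` the series is the exponential series at `K * ⟨u,v⟩`, times the constant factor.
-/

open MeasureTheory Real

/-- The μ-inner product of the probability densities of two Poisson point
processes with intensity functions `u` and `v` equals `exp(K⟨u,v⟩ − ⟨u,1⟩ − ⟨v,1⟩)`. -/
theorem innerProduct_poisson_densities
    (d : ℕ) (hd : 1 ≤ d) (K : ℝ) (hK : 0 < K)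
    (u v : (Fin d → ℝ) → ℝ) (hu : Measurable u) (hv : Measurable v)
    (hu0 : ∀ x, 0 ≤ u x) (hv0 : ∀ x, 0 ≤ v x)
    (huI : Integrable u) (hvI : Integrable v)
    (hu2 : Integrable (fun x => (u x) ^ 2)) (hv2 : Integrable (fun x => (v x) ^ 2)) :
    ∑' i : ℕ, (1 / ((Nat.factorial i : ℝ) * K ^ i)) *
        ∫ x : Fin i → (Fin d → ℝ),
          (Real.exp (-∫ y : Fin d → ℝ, u y) * ∏ j : Fin i, K * u (x j)) *
          (Real.exp (-∫ y : Fin d → ℝ, v y) * ∏ j : Fin i, K * v (x j))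
      = Real.exp (K * (∫ x : Fin d → ℝ, u x * v x)
          - (∫ x : Fin d → ℝ, u x) - (∫ x : Fin d → ℝ, v x)) := by
  set U := ∫ y : Fin d → ℝ, u y
  set V := ∫ y : Fin d → ℝ, v y
  set I := ∫ x : Fin d → ℝ, u x * v x with hI
  have hterm : ∀ i : ℕ, (1 / ((Nat.factorial i : ℝ) * K ^ i)) *
        ∫ x : Fin i → (Fin d → ℝ),
          (Real.exp (-U) * ∏ j : Fin i, K * u (x j)) *
          (Real.exp (-V) * ∏ j : Fin i, K * v (x j))
      = (Real.exp (-U) * Real.exp (-V)) * ((K * I) ^ i / (Nat.factorial i : ℝ)) := by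
    intro i
    have hfactor : ∀ x : Fin i → (Fin d → ℝ),
        (Real.exp (-U) * ∏ j : Fin i, K * u (x j)) *
          (Real.exp (-V) * ∏ j : Fin i, K * v (x j))
        = (Real.exp (-U) * Real.exp (-V) * (K ^ i * K ^ i)) *
          ∏ j : Fin i, u (x j) * v (x j) := by
      intro x
      simp only [Finset.prod_mul_distrib, Finset.prod_const, Finset.card_univ, Fintype.card_fin]
      ring
    simp_rw [hfactor]
    rw [integral_const_mul, integral_fintype_prod_volume_eq_pow (fun y => u y * v y),
      Fintype.card_fin, ← hI, mul_pow]
    have hKi : K ^ i ≠ 0 := pow_ne_zero i hK.ne'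
    field_simp
  simp_rw [hterm]
  rw [tsum_mul_left, (NormedSpace.expSeries_div_hasSum_exp (K * I)).tsum_eq,
    ← Real.exp_eq_exp_ℝ, ← Real.exp_add, ← Real.exp_add]
  ring_nf
end

section
/- Let d ≥ 1, K > 0, and let u, v : ℝ^d → [0,∞) be measurable functions that are both integrable and square-integrable. Define A(w_1, w_2) = ∑_{i=0}^∞ (1/(i!·K^i)) ∫_{(ℝ^d)^i} ( e^{-⟨w_1,1⟩} ∏_{j=1}^i K·w_1(x_j) ) · ( e^{-⟨w_2,1⟩} ∏_{j=1}^i K·w_2(x_j) ) d(x_1,…,x_i) for w_1, w_2 ∈ {u, v}. Then the Cauchy–Schwarz divergence between the two Poisson point processes, D_CS = −ln( A(u,v) / ( √(A(u,u)) · √(A(v,v)) ) ), satisfies D_CS = (K/2) · ∫_{ℝ^d} (u(x) − v(x))² dx. That is, the Cauchy–Schwarz divergence between the probability densities of two Poisson point processes with intensity functions u and v is half the squared L²-distance between their intensity functions (scaled by K). -/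
/-!
The inner product of two Poisson densities has a closed form: the `i`-th term of the series is
`e^{-⟨w₁,1⟩ - ⟨w₂,1⟩} (K ⟨w₁,w₂⟩)^i / i!` because the integrand over `i`-point configurations is a
product of functions of single points, so the series sums to
`exp (-⟨w₁,1⟩ - ⟨w₂,1⟩ + K ⟨w₁,w₂⟩)` (`poisson_inner_eq_exp`). In the logarithm of the
Cauchy–Schwarz quotient the masses cancel, leaving `K (⟨u,u⟩ / 2 + ⟨v,v⟩ / 2 - ⟨u,v⟩)`, which is
`K / 2` times the expanded square `∫ (u - v)²`.
-/

open MeasureTheory Real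

/-- No integrability is required: `integral_fintype_prod_volume_eq_pow` holds for every function,
also when the integrals involved take their default value. -/
lemma poisson_inner_eq_exp (d : ℕ) (K : ℝ) (hK : 0 < K) (w₁ w₂ : (Fin d → ℝ) → ℝ) :
    ∑' i : ℕ, (1 / ((Nat.factorial i : ℝ) * K ^ i)) *
        ∫ x : Fin i → (Fin d → ℝ),
          (Real.exp (-∫ y : Fin d → ℝ, w₁ y) * ∏ j : Fin i, K * w₁ (x j)) *
          (Real.exp (-∫ y : Fin d → ℝ, w₂ y) * ∏ j : Fin i, K * w₂ (x j))
      = Real.exp (-(∫ y, w₁ y) - (∫ y, w₂ y) + K * ∫ y, w₁ y * w₂ y) := by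
  have term_eq (i : ℕ) : (1 / ((Nat.factorial i : ℝ) * K ^ i)) *
        ∫ x : Fin i → (Fin d → ℝ),
          (Real.exp (-∫ y : Fin d → ℝ, w₁ y) * ∏ j : Fin i, K * w₁ (x j)) *
          (Real.exp (-∫ y : Fin d → ℝ, w₂ y) * ∏ j : Fin i, K * w₂ (x j))
      = Real.exp (-(∫ y, w₁ y) - (∫ y, w₂ y)) *
          ((K * ∫ y, w₁ y * w₂ y) ^ i / (Nat.factorial i : ℝ)) := by
    have integrand_eq (x : Fin i → (Fin d → ℝ)) :
        (Real.exp (-∫ y : Fin d → ℝ, w₁ y) * ∏ j : Fin i, K * w₁ (x j)) *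
          (Real.exp (-∫ y : Fin d → ℝ, w₂ y) * ∏ j : Fin i, K * w₂ (x j))
        = (Real.exp (-(∫ y, w₁ y) - (∫ y, w₂ y)) * (K ^ i * K ^ i)) *
          ∏ j : Fin i, w₁ (x j) * w₂ (x j) := by
      rw [sub_eq_add_neg, Real.exp_add]
      simp only [Finset.prod_mul_distrib, Finset.prod_const, Finset.card_univ, Fintype.card_fin]
      ring
    simp_rw [integrand_eq]
    rw [integral_const_mul, integral_fintype_prod_volume_eq_pow (fun y => w₁ y * w₂ y),
      Fintype.card_fin]
    have hfac : (Nat.factorial i : ℝ) ≠ 0 := by positivity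
    rw [mul_pow]
    field_simp
  simp_rw [term_eq]
  rw [tsum_mul_left, Real.exp_add, Real.exp_eq_exp_ℝ, NormedSpace.exp_eq_tsum_div (𝔸 := ℝ)]

/-- **Proposition 1.** The Cauchy–Schwarz divergence between the probability
densities of two Poisson point processes with intensity functions `u` and `v` is half the
squared `L²`-distance between their intensity functions (scaled by `K`). Here
`A w₁ w₂ = ⟨density of Poisson(w₁), density of Poisson(w₂)⟩_μ`. -/
theorem cauchySchwarz_divergence_poisson
    (d : ℕ) (hd : 1 ≤ d) (K : ℝ) (hK : 0 < K)
    (u v : (Fin d → ℝ) → ℝ) (hu : Measurable u) (hv : Measurable v)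
    (hu0 : ∀ x, 0 ≤ u x) (hv0 : ∀ x, 0 ≤ v x)
    (huI : Integrable u) (hvI : Integrable v)
    (hu2 : Integrable (fun x => (u x) ^ 2)) (hv2 : Integrable (fun x => (v x) ^ 2))
    (A : ((Fin d → ℝ) → ℝ) → ((Fin d → ℝ) → ℝ) → ℝ)
    (hA : ∀ w₁ w₂ : (Fin d → ℝ) → ℝ,
      A w₁ w₂ = ∑' i : ℕ, (1 / ((Nat.factorial i : ℝ) * K ^ i)) *
        ∫ x : Fin i → (Fin d → ℝ),
          (Real.exp (-∫ y : Fin d → ℝ, w₁ y) * ∏ j : Fin i, K * w₁ (x j)) *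
          (Real.exp (-∫ y : Fin d → ℝ, w₂ y) * ∏ j : Fin i, K * w₂ (x j))) :
    -Real.log (A u v / (Real.sqrt (A u u) * Real.sqrt (A v v)))
      = (K / 2) * ∫ x : Fin d → ℝ, (u x - v x) ^ 2 := by
  -- `u * v` is integrable as it is dominated by `u² + v²`.
  have huv : Integrable (fun x => u x * v x) := by
    refine (hu2.add hv2).mono' (hu.mul hv).aestronglyMeasurable (.of_forall fun x => ?_)
    simp only [Pi.add_apply, Real.norm_eq_abs, abs_of_nonneg (mul_nonneg (hu0 x) (hv0 x))]
    nlinarith [sq_nonneg (u x - v x), mul_nonneg (hu0 x) (hv0 x)]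
  have hsq : ∫ x, (u x - v x) ^ 2
      = (∫ x, u x * u x) - 2 * (∫ x, u x * v x) + ∫ x, v x * v x := by
    have expand (x : Fin d → ℝ) :
        (u x - v x) ^ 2 = (u x) ^ 2 - 2 * (u x * v x) + (v x) ^ 2 := by ring
    simp_rw [expand, ← pow_two]
    have hdiff : Integrable (fun x => (u x) ^ 2 - 2 * (u x * v x)) := hu2.sub (huv.const_mul 2)
    rw [integral_add hdiff hv2, integral_sub hu2 (huv.const_mul 2),
      integral_const_mul]
  simp only [hA, poisson_inner_eq_exp d K hK, Real.sqrt_eq_rpow, ← Real.exp_mul]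
  rw [← Real.exp_add, ← Real.exp_sub, Real.log_exp, hsq]
  ring
end

section
/- Let d ≥ 1. For each i ∈ {1,…,N_u} let w_u^{(i)} > 0, m_u^{(i)} ∈ ℝ^d, and P_u^{(i)} a symmetric positive-definite d×d real matrix, and similarly w_v^{(j)} > 0, m_v^{(j)} ∈ ℝ^d, P_v^{(j)} for j ∈ {1,…,N_v}. Define the Gaussian mixture intensity functions u(x) = ∑_{i=1}^{N_u} w_u^{(i)} N(x; m_u^{(i)}, P_u^{(i)}) and v(x) = ∑_{j=1}^{N_v} w_v^{(j)} N(x; m_v^{(j)}, P_v^{(j)}). Then (1/2) ∫_{ℝ^d} (u(x) − v(x))² dx = (1/2) ∑_{i=1}^{N_u} ∑_{j=1}^{N_u} w_u^{(i)} w_u^{(j)} N(m_u^{(i)}; m_u^{(j)}, P_u^{(i)} + P_u^{(j)}) + (1/2) ∑_{i=1}^{N_v} ∑_{j=1}^{N_v} w_v^{(i)} w_v^{(j)} N(m_v^{(i)}; m_v^{(j)}, P_v^{(i)} + P_v^{(j)}) − ∑_{i=1}^{N_u} ∑_{j=1}^{N_v} w_u^{(i)} w_v^{(j)} N(m_u^{(i)};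 m_v^{(j)}, P_u^{(i)} + P_v^{(j)}). (By Proposition 1 with hyper-volume unit K = 1, the left-hand side is the Cauchy–Schwarz divergence between the two Poisson point processes with intensity functions u and v.) -/
/-!
Expanding the square, the integral splits into the pairings `∫ u²`, `∫ v²` and `∫ u v`, each a
double sum of integrals of products of two Gaussian densities. Such a product is again an
unnormalised Gaussian: completing the square (`complete_square`) turns the two exponents into a
quadratic form with matrix `A⁻¹ + B⁻¹` plus the constant `(a - b)ᵀ (A + B)⁻¹ (a - b)`. The Gaussian
integral (`gaussian_integral_posDef`) and `det (A⁻¹ + B⁻¹) = det (A + B) / (det A · det B)` then give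
`∫ N(x; a, A) N(x; b, B) dx = N(a; b, A + B)` (`gaussPdf_mul_integral`).
-/

open MeasureTheory Real Matrix

/-- The Gaussian probability density `N(x; m, P)` on `ℝ^d` with mean `m` and
(symmetric positive-definite) covariance matrix `P`, evaluated at `x`. -/
noncomputable def gaussPdf {d : ℕ} (m : Fin d → ℝ) (P : Matrix (Fin d) (Fin d) ℝ)
    (x : Fin d → ℝ) : ℝ :=
  (Real.sqrt ((2 * Real.pi) ^ d * P.det))⁻¹ *
    Real.exp (-(1 / 2) * ((x - m) ⬝ᵥ (P⁻¹ *ᵥ (x - m))))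

/-- The standard Gaussian integral on `ℝ^d`, as a product of one-dimensional ones. -/
lemma std_gaussian_integral (d : ℕ) :
    Integrable (fun x : Fin d → ℝ => Real.exp (-(1 / 2) * (x ⬝ᵥ x))) ∧
      ∫ x : Fin d → ℝ, Real.exp (-(1 / 2) * (x ⬝ᵥ x)) = Real.sqrt ((2 * π) ^ d) := by
  have h : (fun x : Fin d → ℝ => Real.exp (-(1 / 2) * (x ⬝ᵥ x)))
      = fun x => ∏ i, Real.exp (-(1 / 2) * (x i) ^ 2) := by
    funext x
    rw [← Real.exp_sum, ← Finset.mul_sum]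
    simp [dotProduct, sq]
  rw [h]
  constructor
  · exact Integrable.fintype_prod (f := fun (_ : Fin d) (y : ℝ) => Real.exp (-(1 / 2) * y ^ 2))
      fun _ => integrable_exp_neg_mul_sq (by norm_num)
  · rw [integral_fintype_prod_volume_eq_prod
      (fun (_ : Fin d) (y : ℝ) => Real.exp (-(1 / 2) * y ^ 2))]
    have h2 : π / (1 / 2) = 2 * π := by ring
    simp only [integral_gaussian, h2, Finset.prod_const, Finset.card_univ, Fintype.card_fin]
    rw [← Real.sqrt_sq (by positivity : 0 ≤ √(2 * π) ^ d), ← pow_mul, mul_comm d 2, pow_mul,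
      Real.sq_sqrt (by positivity)]

open scoped MatrixOrder in
/-- The Gaussian integral with precision matrix `L`: writing `L = Mᵀ M`, the linear substitution
`y = M x` reduces it to the standard one. -/
lemma gaussian_integral_posDef {d : ℕ} {L : Matrix (Fin d) (Fin d) ℝ} (hL : L.PosDef) :
    Integrable (fun x : Fin d → ℝ => Real.exp (-(1 / 2) * (x ⬝ᵥ (L *ᵥ x)))) ∧
      ∫ x : Fin d → ℝ, Real.exp (-(1 / 2) * (x ⬝ᵥ (L *ᵥ x)))
        = Real.sqrt ((2 * π) ^ d / L.det) := by
  obtain ⟨M, hM⟩ : ∃ M : Matrix (Fin d) (Fin d) ℝ, L = Mᵀ * M := by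
    have ht : (CFC.sqrt L)ᵀ = CFC.sqrt L := (CFC.sqrt_nonneg L).posSemidef.isHermitian
    exact ⟨CFC.sqrt L, by rw [ht, CFC.sqrt_mul_sqrt_self L hL.posSemidef.nonneg]⟩
  have hdet : L.det = M.det ^ 2 := by rw [hM, det_mul, det_transpose, sq]
  have hM0 : M.det ≠ 0 := by
    intro h0
    have := hL.det_pos
    rw [hdet, h0] at this
    norm_num at this
  have hq : ∀ x : Fin d → ℝ, x ⬝ᵥ (L *ᵥ x) = (toLin' M x) ⬝ᵥ (toLin' M x) := by
    intro x
    rw [toLin'_apply, hM, ← mulVec_mulVec, dotProduct_mulVec, vecMul_transpose]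
  obtain ⟨hi, hv⟩ := std_gaussian_integral d
  have hmap := Real.map_matrix_volume_pi_eq_smul_volume_pi hM0
  have hmeas : AEMeasurable (toLin' M) (volume : Measure (Fin d → ℝ)) :=
    (LinearMap.continuous_of_finiteDimensional _).aemeasurable
  have hcont : Continuous (fun x : Fin d → ℝ => Real.exp (-(1 / 2) * (x ⬝ᵥ x))) := by
    unfold dotProduct
    fun_prop
  simp only [hq]
  constructor
  · refine (integrable_map_measure hcont.aestronglyMeasurable hmeas).mp ?_
    rw [hmap]
    exact hi.smul_measure ENNReal.ofReal_ne_top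
  · rw [← integral_map hmeas hcont.aestronglyMeasurable, hmap, integral_smul_measure, hv,
      ENNReal.toReal_ofReal (abs_nonneg _), hdet, Real.sqrt_div (by positivity),
      Real.sqrt_sq_eq_abs, abs_inv, smul_eq_mul]
    ring

/-- Completing the square: with `w = (A + B)⁻¹ (a - b)` and `c = a - A w = b + B w`, the sum of the
two quadratic forms is one centred at `c` plus the constant `(a - b)ᵀ (A + B)⁻¹ (a - b)`. -/
lemma complete_square {d : ℕ} {A B : Matrix (Fin d) (Fin d) ℝ} (hA : A.PosDef) (hB : B.PosDef)
    (a b x : Fin d → ℝ) :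
    (x - a) ⬝ᵥ (A⁻¹ *ᵥ (x - a)) + (x - b) ⬝ᵥ (B⁻¹ *ᵥ (x - b))
      = (x - (a - A *ᵥ ((A + B)⁻¹ *ᵥ (a - b)))) ⬝ᵥ
          ((A⁻¹ + B⁻¹) *ᵥ (x - (a - A *ᵥ ((A + B)⁻¹ *ᵥ (a - b)))))
        + (a - b) ⬝ᵥ ((A + B)⁻¹ *ᵥ (a - b)) := by
  have hAu := (isUnit_iff_isUnit_det _).mp hA.isUnit
  have hBu := (isUnit_iff_isUnit_det _).mp hB.isUnit
  have hSu := (isUnit_iff_isUnit_det _).mp (hA.add hB).isUnit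
  have hAt : Aᵀ = A := hA.isHermitian
  have hBt : Bᵀ = B := hB.isHermitian
  set w := (A + B)⁻¹ *ᵥ (a - b) with hw
  set y := x - (a - A *ᵥ w) with hy
  have hab : a - b = A *ᵥ w + B *ᵥ w := by
    rw [← add_mulVec, hw, mulVec_mulVec, mul_nonsing_inv _ hSu, one_mulVec]
  have hxa : x - a = y - A *ᵥ w := by rw [hy]; abel
  have hxb : x - b = y + B *ᵥ w := by
    have : x - b = (x - a) + (a - b) := by abel
    rw [this, hab, hxa]; abel
  have key : ∀ (C : Matrix (Fin d) (Fin d) ℝ), IsUnit C.det → Cᵀ = C → ∀ z : Fin d → ℝ,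
      (y + C *ᵥ z) ⬝ᵥ (C⁻¹ *ᵥ (y + C *ᵥ z))
        = y ⬝ᵥ (C⁻¹ *ᵥ y) + 2 * (y ⬝ᵥ z) + (C *ᵥ z) ⬝ᵥ z := by
    intro C hC hCt z
    have h1 : C⁻¹ *ᵥ (C *ᵥ z) = z := by rw [mulVec_mulVec, nonsing_inv_mul _ hC, one_mulVec]
    have h2 : (C *ᵥ z) ⬝ᵥ (C⁻¹ *ᵥ y) = y ⬝ᵥ z := by
      rw [dotProduct_mulVec, ← mulVec_transpose, transpose_nonsing_inv, hCt, h1, dotProduct_comm]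
    rw [mulVec_add, h1, dotProduct_add, add_dotProduct, add_dotProduct, h2]
    ring
  have hxa' : x - a = y + A *ᵥ (-w) := by rw [hxa, mulVec_neg, sub_eq_add_neg]
  rw [hxb, hxa', key A hAu hAt, key B hBu hBt, hab, add_mulVec, dotProduct_add, add_dotProduct,
    mulVec_neg, dotProduct_neg, neg_dotProduct_neg]
  ring

/-- The product of two Gaussian densities integrates to a Gaussian density in the difference of
the means, with the covariances added. -/
lemma gaussPdf_mul_integral {d : ℕ} {A B : Matrix (Fin d) (Fin d) ℝ}
    (hA : A.PosDef) (hB : B.PosDef) (a b : Fin d → ℝ) :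
    Integrable (fun x => gaussPdf a A x * gaussPdf b B x) ∧
      ∫ x, gaussPdf a A x * gaussPdf b B x = gaussPdf b (A + B) a := by
  set c := a - A *ᵥ ((A + B)⁻¹ *ᵥ (a - b)) with hc
  have hfun : (fun x => gaussPdf a A x * gaussPdf b B x) = fun x =>
      ((Real.sqrt ((2 * π) ^ d * A.det))⁻¹ * (Real.sqrt ((2 * π) ^ d * B.det))⁻¹ *
        Real.exp (-(1 / 2) * ((a - b) ⬝ᵥ ((A + B)⁻¹ *ᵥ (a - b))))) *
      Real.exp (-(1 / 2) * ((x - c) ⬝ᵥ ((A⁻¹ + B⁻¹) *ᵥ (x - c)))) := by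
    funext x
    unfold gaussPdf
    rw [mul_mul_mul_comm, ← Real.exp_add, ← mul_add, complete_square hA hB, mul_add, Real.exp_add]
    ring
  obtain ⟨hi, hv⟩ := gaussian_integral_posDef (hA.inv.add hB.inv)
  rw [hfun]
  refine ⟨(hi.comp_sub_right c).const_mul _, ?_⟩
  have ha := hA.det_pos
  have hb := hB.det_pos
  have hs := (hA.add hB).det_pos
  have hdet : (A⁻¹ + B⁻¹).det = (A + B).det / (A.det * B.det) := by
    have hAu := (isUnit_iff_isUnit_det _).mp hA.isUnit
    have hBu := (isUnit_iff_isUnit_det _).mp hB.isUnit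
    have h : A * (A⁻¹ + B⁻¹) * B = A + B := by
      rw [mul_add, add_mul, mul_nonsing_inv _ hAu, one_mul, mul_assoc, nonsing_inv_mul _ hBu,
        mul_one, add_comm]
    rw [← h, det_mul, det_mul]
    field_simp
  rw [integral_const_mul, integral_sub_right_eq_self
    (fun x => Real.exp (-(1 / 2) * (x ⬝ᵥ ((A⁻¹ + B⁻¹) *ᵥ x)))) c, hv, hdet]
  unfold gaussPdf
  have hT : 0 < (2 * π) ^ d := by positivity
  have hsqrt : (Real.sqrt ((2 * π) ^ d * A.det))⁻¹ * (Real.sqrt ((2 * π) ^ d * B.det))⁻¹ *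
      Real.sqrt ((2 * π) ^ d / ((A + B).det / (A.det * B.det)))
        = (Real.sqrt ((2 * π) ^ d * (A + B).det))⁻¹ := by
    rw [← Real.sqrt_inv, ← Real.sqrt_inv, ← Real.sqrt_inv, ← Real.sqrt_mul (by positivity),
      ← Real.sqrt_mul (by positivity)]
    congr 1
    field_simp
  rw [← hsqrt]
  ring

/-- Bilinear extension of `gaussPdf_mul_integral` to mixtures. -/
lemma mixture_mul_integral {d m n : ℕ}
    (wu : Fin m → ℝ) (mu : Fin m → (Fin d → ℝ)) (Pu : Fin m → Matrix (Fin d) (Fin d) ℝ)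
    (hPu : ∀ i, (Pu i).PosDef)
    (wv : Fin n → ℝ) (mv : Fin n → (Fin d → ℝ)) (Pv : Fin n → Matrix (Fin d) (Fin d) ℝ)
    (hPv : ∀ j, (Pv j).PosDef) :
    Integrable (fun x => (∑ i, wu i * gaussPdf (mu i) (Pu i) x) *
        (∑ j, wv j * gaussPdf (mv j) (Pv j) x)) ∧
      ∫ x, (∑ i, wu i * gaussPdf (mu i) (Pu i) x) * (∑ j, wv j * gaussPdf (mv j) (Pv j) x)
        = ∑ i, ∑ j, wu i * wv j * gaussPdf (mv j) (Pu i + Pv j) (mu i) := by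
  have hfun : (fun x => (∑ i, wu i * gaussPdf (mu i) (Pu i) x) *
        (∑ j, wv j * gaussPdf (mv j) (Pv j) x)) = fun x => ∑ i, ∑ j,
        wu i * wv j * (gaussPdf (mu i) (Pu i) x * gaussPdf (mv j) (Pv j) x) := by
    funext x
    rw [Finset.sum_mul_sum]
    refine Finset.sum_congr rfl fun i _ => Finset.sum_congr rfl fun j _ => ?_
    ring
  have hi : ∀ i j, Integrable (fun x =>
      wu i * wv j * (gaussPdf (mu i) (Pu i) x * gaussPdf (mv j) (Pv j) x)) := fun i j =>
    (gaussPdf_mul_integral (hPu i) (hPv j) (mu i) (mv j)).1.const_mul _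
  have hi' : ∀ i, Integrable (fun x => ∑ j,
      wu i * wv j * (gaussPdf (mu i) (Pu i) x * gaussPdf (mv j) (Pv j) x)) := fun i =>
    integrable_finsetSum _ fun j _ => hi i j
  rw [hfun]
  refine ⟨integrable_finsetSum _ fun i _ => hi' i, ?_⟩
  rw [integral_finsetSum _ fun i _ => hi' i]
  refine Finset.sum_congr rfl fun i _ => ?_
  rw [integral_finsetSum _ fun j _ => hi i j]
  refine Finset.sum_congr rfl fun j _ => ?_
  rw [integral_const_mul, (gaussPdf_mul_integral (hPu i) (hPv j) (mu i) (mv j)).2]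

/-- **Corollary 1.** Closed form for half the squared `L²`-distance between two
Gaussian mixture intensity functions, i.e. (with hyper-volume unit `K = 1`) the Cauchy–Schwarz
divergence between the two Poisson point processes with those intensities. -/
theorem cauchySchwarz_divergence_gaussianMixture
    (d : ℕ) (hd : 1 ≤ d) (Nu Nv : ℕ)
    (wu : Fin Nu → ℝ) (hwu : ∀ i, 0 < wu i)
    (mu : Fin Nu → (Fin d → ℝ)) (Pu : Fin Nu → Matrix (Fin d) (Fin d) ℝ)
    (hPu : ∀ i, (Pu i).PosDef)
    (wv : Fin Nv → ℝ) (hwv : ∀ j, 0 < wv j)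
    (mv : Fin Nv → (Fin d → ℝ)) (Pv : Fin Nv → Matrix (Fin d) (Fin d) ℝ)
    (hPv : ∀ j, (Pv j).PosDef) :
    (1 / 2) * ∫ x : Fin d → ℝ,
        ((∑ i : Fin Nu, wu i * gaussPdf (mu i) (Pu i) x) -
          (∑ j : Fin Nv, wv j * gaussPdf (mv j) (Pv j) x)) ^ 2
      = (1 / 2) * (∑ i : Fin Nu, ∑ j : Fin Nu,
            wu i * wu j * gaussPdf (mu j) (Pu i + Pu j) (mu i))
        + (1 / 2) * (∑ i : Fin Nv, ∑ j : Fin Nv,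
            wv i * wv j * gaussPdf (mv j) (Pv i + Pv j) (mv i))
        - ∑ i : Fin Nu, ∑ j : Fin Nv,
            wu i * wv j * gaussPdf (mv j) (Pu i + Pv j) (mu i) := by
  obtain ⟨iuu, huu⟩ := mixture_mul_integral wu mu Pu hPu wu mu Pu hPu
  obtain ⟨ivv, hvv⟩ := mixture_mul_integral wv mv Pv hPv wv mv Pv hPv
  obtain ⟨iuv, huv⟩ := mixture_mul_integral wu mu Pu hPu wv mv Pv hPv
  have hsq : ∀ p q : ℝ, (p - q) ^ 2 = p * p + q * q - 2 * (p * q) := fun p q => by ring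
  simp only [hsq]
  rw [integral_sub (by exact iuu.add ivv) (iuv.const_mul 2), integral_add iuu ivv, integral_const_mul,
    huu, hvv, huv]
  ring
end

section
/- Let d ≥ 1, K > 0. Let u_1,…,u_{N_f} and v_1,…,v_{N_g} : ℝ^d → [0,∞) be measurable, integrable, square-integrable intensity functions, and let w_f^{(1)},…,w_f^{(N_f)} and w_g^{(1)},…,w_g^{(N_g)} be nonnegative weights. Consider the mixture densities whose value on an i-point configuration (x_1,…,x_i) is f_i(x_1,…,x_i) = ∑_{a=1}^{N_f} w_f^{(a)} e^{-⟨u_a,1⟩} ∏_{j=1}^i K·u_a(x_j) and g_i(x_1,…,x_i) = ∑_{b=1}^{N_g} w_g^{(b)} e^{-⟨v_b,1⟩} ∏_{j=1}^i K·v_b(x_j). Then ∑_{i=0}^∞ (1/(i!·K^i)) ∫_{(ℝ^d)^i} f_i(x_1,…,x_i)·g_i(x_1,…,x_i) d(x_1,…,x_i) = ∑_{a=1}^{N_f} ∑_{b=1}^{N_g} w_f^{(a)} w_g^{(b)} exp( K·⟨u_a, v_b⟩ − ⟨u_a,1⟩ − ⟨v_b,1⟩ ). -/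
open MeasureTheory Real

/-!
Expanding the product of the two finite mixtures, each pair `(a, b)` contributes to the
`i`-point integral the factorized function `∏ j, K² u_a(x_j) v_b(x_j)`, whose integral is
`(K² ⟨u_a, v_b⟩) ^ i` by Fubini. After division by `i! K ^ i` the pair's contribution is
`(K ⟨u_a, v_b⟩) ^ i / i!`, and these sum to `exp (K ⟨u_a, v_b⟩)`. Square-integrability
makes each `u_a v_b` integrable, which is what permits exchanging the integral with the
double sum over pairs (`integral_mixture_mul`).
-/

/-- The integral over `i`-point configurations of the product of two finite mixtures of
product functions; `p` and `q` absorb the weights and the exponential factors. -/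
lemma integral_mixture_mul {E ι κ : Type*} [Fintype ι] [Fintype κ] [MeasureSpace E]
    [SigmaFinite (volume : Measure E)] (K : ℝ) (u : ι → E → ℝ) (v : κ → E → ℝ)
    (huv : ∀ a b, Integrable (fun x => u a x * v b x)) (p : ι → ℝ) (q : κ → ℝ) (i : ℕ) :
    ∫ x : Fin i → E, (∑ a, p a * ∏ j : Fin i, K * u a (x j)) *
        (∑ b, q b * ∏ j : Fin i, K * v b (x j))
      = ∑ a, ∑ b, p a * q b * (K ^ 2 * ∫ x, u a x * v b x) ^ i := by
  have key : ∀ x : Fin i → E, (∑ a, p a * ∏ j : Fin i, K * u a (x j)) *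
        (∑ b, q b * ∏ j : Fin i, K * v b (x j))
      = ∑ a, ∑ b, p a * q b * ∏ j : Fin i, (K ^ 2 * (u a (x j) * v b (x j))) := by
    intro x
    rw [Finset.sum_mul_sum]
    refine Finset.sum_congr rfl fun a _ => Finset.sum_congr rfl fun b _ => ?_
    rw [mul_mul_mul_comm, ← Finset.prod_mul_distrib]
    congr 1
    exact Finset.prod_congr rfl fun j _ => by ring
  have hint : ∀ a b, Integrable (fun x : Fin i → E =>
      p a * q b * ∏ j : Fin i, (K ^ 2 * (u a (x j) * v b (x j)))) := fun a b =>
    (Integrable.fintype_prod (f := fun _ y => K ^ 2 * (u a y * v b y))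
      fun _ => (huv a b).const_mul _).const_mul _
  simp_rw [key]
  rw [integral_finsetSum _ fun a _ => integrable_finsetSum _ fun b _ => hint a b]
  refine Finset.sum_congr rfl fun a _ => ?_
  rw [integral_finsetSum _ fun b _ => hint a b]
  refine Finset.sum_congr rfl fun b _ => ?_
  rw [integral_const_mul,
    integral_fintype_prod_volume_eq_pow (fun y => K ^ 2 * (u a y * v b y)),
    integral_const_mul, Fintype.card_fin]

/-- The μ-inner product of the probability densities of two mixtures of
Poisson point processes equals
`∑_a ∑_b w_f^{(a)} w_g^{(b)} exp(K⟨u_a,v_b⟩ − ⟨u_a,1⟩ − ⟨v_b,1⟩)`. -/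
theorem innerProduct_poissonMixture_densities
    (d : ℕ) (hd : 1 ≤ d) (K : ℝ) (hK : 0 < K) (Nf Ng : ℕ)
    (u : Fin Nf → (Fin d → ℝ) → ℝ) (v : Fin Ng → (Fin d → ℝ) → ℝ)
    (hu : ∀ a, Measurable (u a)) (hv : ∀ b, Measurable (v b))
    (hu0 : ∀ a x, 0 ≤ u a x) (hv0 : ∀ b x, 0 ≤ v b x)
    (huI : ∀ a, Integrable (u a)) (hvI : ∀ b, Integrable (v b))
    (hu2 : ∀ a, Integrable (fun x => (u a x) ^ 2))
    (hv2 : ∀ b, Integrable (fun x => (v b x) ^ 2))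
    (wf : Fin Nf → ℝ) (wg : Fin Ng → ℝ)
    (hwf : ∀ a, 0 ≤ wf a) (hwg : ∀ b, 0 ≤ wg b) :
    ∑' i : ℕ, (1 / ((Nat.factorial i : ℝ) * K ^ i)) *
        ∫ x : Fin i → (Fin d → ℝ),
          (∑ a : Fin Nf, wf a * Real.exp (-∫ y : Fin d → ℝ, u a y) *
              ∏ j : Fin i, K * u a (x j)) *
          (∑ b : Fin Ng, wg b * Real.exp (-∫ y : Fin d → ℝ, v b y) *
              ∏ j : Fin i, K * v b (x j))
      = ∑ a : Fin Nf, ∑ b : Fin Ng, wf a * wg b *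
          Real.exp (K * (∫ x : Fin d → ℝ, u a x * v b x)
            - (∫ x : Fin d → ℝ, u a x) - (∫ x : Fin d → ℝ, v b x)) := by
  have huv : ∀ a b, Integrable (fun x => u a x * v b x) := fun a b =>
    ((memLp_two_iff_integrable_sq (hu a).aestronglyMeasurable).2 (hu2 a)).integrable_mul
      ((memLp_two_iff_integrable_sq (hv b).aestronglyMeasurable).2 (hv2 b))
  simp_rw [integral_mixture_mul K u v huv, Finset.mul_sum]
  refine HasSum.tsum_eq (hasSum_sum fun a _ => hasSum_sum fun b _ => ?_)
  have hexp : HasSum (fun i : ℕ => (K * ∫ x, u a x * v b x) ^ i / (Nat.factorial i : ℝ))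
      (Real.exp (K * ∫ x, u a x * v b x)) := by
    rw [Real.exp_eq_exp_ℝ]
    exact NormedSpace.expSeries_div_hasSum_exp _
  convert! hexp.mul_left (wf a * Real.exp (-∫ y, u a y) * (wg b * Real.exp (-∫ y, v b y)))
    using 1
  · funext i
    have hi : (Nat.factorial i : ℝ) ≠ 0 := by positivity
    simp only [mul_pow]
    field_simp
    ring
  · rw [sub_eq_add_neg, sub_eq_add_neg, Real.exp_add, Real.exp_add]
    ring
end

section
/- Let d ≥ 1, K > 0. Let u_1,…,u_{N_f} and v_1,…,v_{N_g} : ℝ^d → [0,∞) be measurable, integrable, square-integrable intensity functions, and let w_f^{(1)},…,w_f^{(N_f)} and w_g^{(1)},…,w_g^{(N_g)} be positive weights with ∑_a w_f^{(a)} = ∑_b w_g^{(b)} = 1. Let f and g be the corresponding Poisson-mixture probability densities, with value on an i-point configuration f_i(x_1,…,x_i) = ∑_a w_f^{(a)} e^{-⟨u_a,1⟩} ∏_{j=1}^i K·u_a(x_j), and similarly g_i with the v's. Then the Cauchy–Schwarz divergence D_CS(f,g) = −ln( ⟨f,g⟩_μ / (‖f‖_μ ‖g‖_μ) ) satisfies: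 D_CS(f,g) = −ln( ∑_{a=1}^{N_f} ∑_{b=1}^{N_g} w_f^{(a)} w_g^{(b)} e^{K⟨u_a,v_b⟩ − ⟨u_a,1⟩ − ⟨v_b,1⟩} ) + (1/2)·ln( ∑_{a=1}^{N_f} ∑_{b=1}^{N_f} w_f^{(a)} w_f^{(b)} e^{K⟨u_a,u_b⟩ − ⟨u_a,1⟩ − ⟨u_b,1⟩} ) + (1/2)·ln( ∑_{a=1}^{N_g} ∑_{b=1}^{N_g} w_g^{(a)} w_g^{(b)} e^{K⟨v_a,v_b⟩ − ⟨v_a,1⟩ − ⟨v_b,1⟩} ). -/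
open MeasureTheory Real

/-!
Everything reduces to the closed form of the `μ`-inner product of two Poisson mixtures
(`mixture_inner_product`). By bilinearity it is a double sum over components; for one pair of
components with intensities `u`, `v` Fubini turns the integral over `i`-point configurations into
`(K² ⟨u,v⟩)ⁱ`, and after division by `i! Kⁱ` the sum over `i` is the exponential series of `K ⟨u,v⟩`.
Square-integrability of the intensities makes `u v` integrable, which justifies exchanging the finite
sums with the integral. All closed forms are positive (the weights are positive and there is at
least one component), so the logarithm of the quotient splits.
-/

/-- The `i`-point integral of a product of two mixtures: Fubini applied to each pair of
components. -/
lemma mixture_integral {d m n : ℕ} (K : ℝ)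
    (u : Fin m → (Fin d → ℝ) → ℝ) (v : Fin n → (Fin d → ℝ) → ℝ)
    (huv : ∀ a b, Integrable (fun x => u a x * v b x))
    (p : Fin m → ℝ) (q : Fin n → ℝ) (i : ℕ) :
    ∫ x : Fin i → (Fin d → ℝ),
        (∑ a, p a * ∏ j : Fin i, K * u a (x j)) * (∑ b, q b * ∏ j : Fin i, K * v b (x j))
      = ∑ a, ∑ b, p a * q b * (K ^ 2 * ∫ x, u a x * v b x) ^ i := by
  have hprod : ∀ x : Fin i → (Fin d → ℝ),
      (∑ a, p a * ∏ j : Fin i, K * u a (x j)) * (∑ b, q b * ∏ j : Fin i, K * v b (x j))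
        = ∑ a, ∑ b, p a * q b * ∏ j : Fin i, K ^ 2 * (u a (x j) * v b (x j)) := by
    intro x
    rw [Finset.sum_mul_sum]
    refine Finset.sum_congr rfl fun a _ => Finset.sum_congr rfl fun b _ => ?_
    rw [mul_mul_mul_comm, ← Finset.prod_mul_distrib]
    congr 1
    exact Finset.prod_congr rfl fun j _ => by ring
  have hint : ∀ a b, Integrable (fun x : Fin i → (Fin d → ℝ) =>
      p a * q b * ∏ j : Fin i, K ^ 2 * (u a (x j) * v b (x j))) := fun a b =>
    (Integrable.fintype_prod (f := fun (_ : Fin i) y => K ^ 2 * (u a y * v b y))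
      (fun _ => (huv a b).const_mul _)).const_mul _
  simp_rw [hprod]
  rw [integral_finsetSum _ fun a _ => integrable_finsetSum _ fun b _ => hint a b]
  refine Finset.sum_congr rfl fun a _ => ?_
  rw [integral_finsetSum _ fun b _ => hint a b]
  refine Finset.sum_congr rfl fun b _ => ?_
  rw [integral_const_mul,
    integral_fintype_prod_volume_eq_pow (fun y => K ^ 2 * (u a y * v b y)), integral_const_mul,
    Fintype.card_fin]

/-- Closed form of the `μ`-inner product of two Poisson mixtures. -/
lemma mixture_inner_product {d m n : ℕ} {K : ℝ} (hK : 0 < K)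
    (u : Fin m → (Fin d → ℝ) → ℝ) (v : Fin n → (Fin d → ℝ) → ℝ)
    (hu : ∀ a, Measurable (u a)) (hv : ∀ b, Measurable (v b))
    (hu2 : ∀ a, Integrable (fun x => (u a x) ^ 2))
    (hv2 : ∀ b, Integrable (fun x => (v b x) ^ 2))
    (wf : Fin m → ℝ) (wg : Fin n → ℝ) :
    ∑' i : ℕ, (1 / ((Nat.factorial i : ℝ) * K ^ i)) *
        ∫ x : Fin i → (Fin d → ℝ),
          (∑ a : Fin m, wf a * Real.exp (-∫ y : Fin d → ℝ, u a y) *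
              ∏ j : Fin i, K * u a (x j)) *
          (∑ b : Fin n, wg b * Real.exp (-∫ y : Fin d → ℝ, v b y) *
              ∏ j : Fin i, K * v b (x j))
      = ∑ a : Fin m, ∑ b : Fin n, wf a * wg b *
            Real.exp (K * (∫ x : Fin d → ℝ, u a x * v b x)
              - (∫ x : Fin d → ℝ, u a x) - (∫ x : Fin d → ℝ, v b x)) := by
  have huv : ∀ a b, Integrable (fun x => u a x * v b x) := fun a b =>
    ((memLp_two_iff_integrable_sq (hu a).aestronglyMeasurable).2 (hu2 a)).integrable_mul
      ((memLp_two_iff_integrable_sq (hv b).aestronglyMeasurable).2 (hv2 b))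
  have hexp : ∀ t : ℝ, HasSum (fun i : ℕ => t ^ i / (Nat.factorial i : ℝ)) (Real.exp t) := by
    intro t
    rw [Real.exp_eq_exp_ℝ]
    exact NormedSpace.expSeries_div_hasSum_exp t
  refine HasSum.tsum_eq ?_
  simp_rw [mixture_integral K u v huv (fun a => wf a * Real.exp (-∫ y, u a y))
    (fun b => wg b * Real.exp (-∫ y, v b y)), Finset.mul_sum]
  refine hasSum_sum fun a _ => hasSum_sum fun b _ => ?_
  convert (hexp (K * ∫ x, u a x * v b x)).mul_left
    (wf a * Real.exp (-∫ y, u a y) * (wg b * Real.exp (-∫ y, v b y))) using 1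
  · rfl
  · funext i
    have hKi : K ^ i ≠ 0 := (pow_pos hK i).ne'
    have hi : (Nat.factorial i : ℝ) ≠ 0 := by positivity
    rw [show K ^ 2 * (∫ x, u a x * v b x) = K * (K * ∫ x, u a x * v b x) by ring,
      mul_pow K (K * _)]
    field_simp
  · rw [sub_sub, sub_eq_add_neg, neg_add, Real.exp_add, Real.exp_add]
    ring

/-- **Corollary 2.** Closed form for the Cauchy–Schwarz divergence
`D_CS(f,g) = −ln(⟨f,g⟩_μ / (‖f‖_μ ‖g‖_μ))` between two mixtures of Poisson point processes.
Here `Ifg`, `Iff`, `Igg` denote the μ-inner products `⟨f,g⟩_μ`, `⟨f,f⟩_μ`, `⟨g,g⟩_μ`. -/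
theorem cauchySchwarz_divergence_poissonMixtures
    (d : ℕ) (hd : 1 ≤ d) (K : ℝ) (hK : 0 < K) (Nf Ng : ℕ)
    (u : Fin Nf → (Fin d → ℝ) → ℝ) (v : Fin Ng → (Fin d → ℝ) → ℝ)
    (hu : ∀ a, Measurable (u a)) (hv : ∀ b, Measurable (v b))
    (hu0 : ∀ a x, 0 ≤ u a x) (hv0 : ∀ b x, 0 ≤ v b x)
    (huI : ∀ a, Integrable (u a)) (hvI : ∀ b, Integrable (v b))
    (hu2 : ∀ a, Integrable (fun x => (u a x) ^ 2))
    (hv2 : ∀ b, Integrable (fun x => (v b x) ^ 2))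
    (wf : Fin Nf → ℝ) (wg : Fin Ng → ℝ)
    (hwf : ∀ a, 0 < wf a) (hwg : ∀ b, 0 < wg b)
    (hwf1 : ∑ a : Fin Nf, wf a = 1) (hwg1 : ∑ b : Fin Ng, wg b = 1)
    (Ifg Iff Igg : ℝ)
    (hIfg : Ifg = ∑' i : ℕ, (1 / ((Nat.factorial i : ℝ) * K ^ i)) *
        ∫ x : Fin i → (Fin d → ℝ),
          (∑ a : Fin Nf, wf a * Real.exp (-∫ y : Fin d → ℝ, u a y) *
              ∏ j : Fin i, K * u a (x j)) *
          (∑ b : Fin Ng, wg b * Real.exp (-∫ y : Fin d → ℝ, v b y) *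
              ∏ j : Fin i, K * v b (x j)))
    (hIff : Iff = ∑' i : ℕ, (1 / ((Nat.factorial i : ℝ) * K ^ i)) *
        ∫ x : Fin i → (Fin d → ℝ),
          (∑ a : Fin Nf, wf a * Real.exp (-∫ y : Fin d → ℝ, u a y) *
              ∏ j : Fin i, K * u a (x j)) *
          (∑ b : Fin Nf, wf b * Real.exp (-∫ y : Fin d → ℝ, u b y) *
              ∏ j : Fin i, K * u b (x j)))
    (hIgg : Igg = ∑' i : ℕ, (1 / ((Nat.factorial i : ℝ) * K ^ i)) *
        ∫ x : Fin i → (Fin d → ℝ),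
          (∑ a : Fin Ng, wg a * Real.exp (-∫ y : Fin d → ℝ, v a y) *
              ∏ j : Fin i, K * v a (x j)) *
          (∑ b : Fin Ng, wg b * Real.exp (-∫ y : Fin d → ℝ, v b y) *
              ∏ j : Fin i, K * v b (x j))) :
    -Real.log (Ifg / (Real.sqrt Iff * Real.sqrt Igg))
      = -Real.log (∑ a : Fin Nf, ∑ b : Fin Ng, wf a * wg b *
            Real.exp (K * (∫ x : Fin d → ℝ, u a x * v b x)
              - (∫ x : Fin d → ℝ, u a x) - (∫ x : Fin d → ℝ, v b x)))
        + (1 / 2) * Real.log (∑ a : Fin Nf, ∑ b : Fin Nf, wf a * wf b *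
            Real.exp (K * (∫ x : Fin d → ℝ, u a x * u b x)
              - (∫ x : Fin d → ℝ, u a x) - (∫ x : Fin d → ℝ, u b x)))
        + (1 / 2) * Real.log (∑ a : Fin Ng, ∑ b : Fin Ng, wg a * wg b *
            Real.exp (K * (∫ x : Fin d → ℝ, v a x * v b x)
              - (∫ x : Fin d → ℝ, v a x) - (∫ x : Fin d → ℝ, v b x))) := by
  have ne_of_sum : ∀ {k : ℕ} (w : Fin k → ℝ), ∑ a, w a = 1 → Nonempty (Fin k) := by
    intro k w hw
    by_contra h
    rw [not_nonempty_iff] at h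
    simp at hw
  have := ne_of_sum wf hwf1
  have := ne_of_sum wg hwg1
  have pos : ∀ {k l : ℕ} [Nonempty (Fin k)] [Nonempty (Fin l)] (w : Fin k → ℝ) (w' : Fin l → ℝ)
      (c : Fin k → Fin l → ℝ), (∀ a, 0 < w a) → (∀ b, 0 < w' b) →
      0 < ∑ a, ∑ b, w a * w' b * Real.exp (c a b) := by
    intro k l _ _ w w' c hw hw'
    exact Finset.sum_pos (fun a _ => Finset.sum_pos (fun b _ =>
      mul_pos (mul_pos (hw a) (hw' b)) (Real.exp_pos _)) Finset.univ_nonempty)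
      Finset.univ_nonempty
  rw [mixture_inner_product hK u v hu hv hu2 hv2] at hIfg
  rw [mixture_inner_product hK u u hu hu hu2 hu2] at hIff
  rw [mixture_inner_product hK v v hv hv hv2 hv2] at hIgg
  have hfg : 0 < Ifg := hIfg ▸ pos wf wg _ hwf hwg
  have hff : 0 < Iff := hIff ▸ pos wf wf _ hwf hwf
  have hgg : 0 < Igg := hIgg ▸ pos wg wg _ hwg hwg
  rw [← hIfg, ← hIff, ← hIgg, Real.log_div hfg.ne' (by positivity),
    Real.log_mul (by positivity) (by positivity), Real.log_sqrt hff.le, Real.log_sqrt hgg.le]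
  ring
end

section
/- Let d ≥ 1, K > 0, and let u, v : ℝ^d → [0,∞) be measurable integrable functions. Let f and g be the probability densities (with respect to the reference measure μ with hyper-volume unit K) of Poisson point processes with intensity functions u and v, i.e. on an i-point configuration f_i(x_1,…,x_i) = e^{-⟨u,1⟩} ∏_{j=1}^i K·u(x_j) and g_i(x_1,…,x_i) = e^{-⟨v,1⟩} ∏_{j=1}^i K·v(x_j). Then the Bhattacharyya coefficient ∑_{i=0}^∞ (1/(i!·K^i)) ∫_{(ℝ^d)^i} √(f_i(x_1,…,x_i)) · √(g_i(x_1,…,x_i)) d(x_1,…,x_i) equals exp( ∫_{ℝ^d} √(u(x)·v(x)) dx − (⟨u,1⟩ + ⟨v,1⟩)/2 ). -/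
open MeasureTheory Real

/-!
Both densities are products over the points of the configuration, so on `i` points the integrand
`√f_i · √g_i` is `e^{-(⟨u,1⟩ + ⟨v,1⟩)/2} ∏_j K √(u(x_j) v(x_j))`. Fubini turns its integral into
`e^{-(⟨u,1⟩ + ⟨v,1⟩)/2} (K ∫ √(u v))^i`; the powers of `K` cancel, and what remains is the
exponential series of `∫ √(u v)`.
-/

/-- The factorized form of the integrand `√f_i · √g_i`, at a configuration where the two
intensities take the values `a j` and `b j`. -/
lemma sqrt_mul_sqrt_poisson_density {i : ℕ} {K : ℝ} (hK : 0 < K) (U V : ℝ) (a b : Fin i → ℝ)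
    (ha : ∀ j, 0 ≤ a j) (hb : ∀ j, 0 ≤ b j) :
    √(exp (-U) * ∏ j, K * a j) * √(exp (-V) * ∏ j, K * b j)
      = exp (-(U + V) / 2) * ∏ j, K * √(a j * b j) := by
  have hP : 0 ≤ ∏ j, K * √(a j * b j) := Finset.prod_nonneg fun j _ => by positivity
  have hA : 0 ≤ ∏ j, K * a j := Finset.prod_nonneg fun j _ => mul_nonneg hK.le (ha j)
  rw [← Real.sqrt_mul (by positivity), Real.sqrt_eq_iff_mul_self_eq]
  · have h1 : exp (-(U + V) / 2) * exp (-(U + V) / 2) = exp (-U) * exp (-V) := by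
      rw [← exp_add, ← exp_add]; ring_nf
    have h2 : (∏ j, K * √(a j * b j)) * (∏ j, K * √(a j * b j))
        = (∏ j, K * a j) * ∏ j, K * b j := by
      rw [← Finset.prod_mul_distrib, ← Finset.prod_mul_distrib]
      refine Finset.prod_congr rfl fun j _ => ?_
      have := Real.mul_self_sqrt (mul_nonneg (ha j) (hb j))
      linear_combination K ^ 2 * this
    rw [mul_mul_mul_comm, ← h1, ← h2, mul_mul_mul_comm]
  · have hB : 0 ≤ ∏ j, K * b j := Finset.prod_nonneg fun j _ => mul_nonneg hK.le (hb j)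
    positivity
  · positivity

/-- The Bhattacharyya coefficient `⟨√f, √g⟩_μ` between the probability
densities of two Poisson point processes with intensity functions `u` and `v` equals
`exp(∫ √(u·v) − (⟨u,1⟩ + ⟨v,1⟩)/2)`. -/
theorem bhattacharyya_coefficient_poisson
    (d : ℕ) (hd : 1 ≤ d) (K : ℝ) (hK : 0 < K)
    (u v : (Fin d → ℝ) → ℝ) (hu : Measurable u) (hv : Measurable v)
    (hu0 : ∀ x, 0 ≤ u x) (hv0 : ∀ x, 0 ≤ v x)
    (huI : Integrable u) (hvI : Integrable v) :
    ∑' i : ℕ, (1 / ((Nat.factorial i : ℝ) * K ^ i)) *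
        ∫ x : Fin i → (Fin d → ℝ),
          Real.sqrt (Real.exp (-∫ y : Fin d → ℝ, u y) * ∏ j : Fin i, K * u (x j)) *
          Real.sqrt (Real.exp (-∫ y : Fin d → ℝ, v y) * ∏ j : Fin i, K * v (x j))
      = Real.exp ((∫ x : Fin d → ℝ, Real.sqrt (u x * v x))
          - ((∫ x : Fin d → ℝ, u x) + (∫ x : Fin d → ℝ, v x)) / 2) := by
  have hterm : ∀ i : ℕ, (1 / ((Nat.factorial i : ℝ) * K ^ i)) *
        (∫ x : Fin i → (Fin d → ℝ),
          Real.sqrt (Real.exp (-∫ y : Fin d → ℝ, u y) * ∏ j : Fin i, K * u (x j)) *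
          Real.sqrt (Real.exp (-∫ y : Fin d → ℝ, v y) * ∏ j : Fin i, K * v (x j)))
      = exp (-((∫ y, u y) + ∫ y, v y) / 2) * ((∫ x, √(u x * v x)) ^ i / (Nat.factorial i : ℝ)) := by
    intro i
    simp_rw [fun x : Fin i → (Fin d → ℝ) => sqrt_mul_sqrt_poisson_density hK (∫ y, u y) (∫ y, v y)
      (fun j => u (x j)) (fun j => v (x j)) (fun j => hu0 _) (fun j => hv0 _)]
    rw [integral_const_mul,
      integral_fintype_prod_volume_eq_pow (ι := Fin i) (fun x => K * √(u x * v x)),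
      integral_const_mul, Fintype.card_fin, mul_pow]
    have : (Nat.factorial i : ℝ) ≠ 0 := by positivity
    field_simp
  simp_rw [hterm]
  rw [tsum_mul_left, ← congrFun NormedSpace.exp_eq_tsum_div, ← congrFun Real.exp_eq_exp_ℝ,
    ← exp_add]
  ring_nf
end

section
/- Let d ≥ 1, K > 0, and let u, v : ℝ^d → [0,∞) be measurable integrable functions. Let f and g be the probability densities (with respect to the reference measure μ with hyper-volume unit K) of Poisson point processes with intensity functions u and v, i.e. on an i-point configuration f_i(x_1,…,x_i) = e^{-⟨u,1⟩} ∏_{j=1}^i K·u(x_j) and g_i(x_1,…,x_i) = e^{-⟨v,1⟩} ∏_{j=1}^i K·v(x_j). Then the Bhattacharyya distance D_B = −ln( ∑_{i=0}^∞ (1/(i!·K^i)) ∫_{(ℝ^d)^i} √(f_i) · √(g_i) d(x_1,…,x_i) ) satisfies D_B = (1/2) ∫_{ℝ^d} ( √(u(x)) − √(v(x)) )² dx. That is, the Bhattacharyya distance between the probability distributions of two Poisson point processes equals the square of the Hellinger distance D_H(U,V) = (1/√2)·‖√u − √v‖_{L²} between their intensity measures, and equivalently equals (⟨u,1⟩ +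 ⟨v,1⟩)/2 − ∫_{ℝ^d} √(u(x)·v(x)) dx. -/
/-!
On an `i`-point configuration `√f_i · √g_i = e^{-(⟨u,1⟩+⟨v,1⟩)/2} ∏_j K √(u(x_j) v(x_j))`, so by
Fubini its integral is `e^{-(⟨u,1⟩+⟨v,1⟩)/2} (K S)^i` with `S = ∫ √(u v)`. The powers of `K` cancel
and the exponential series gives `⟨√f, √g⟩_μ = e^{S - (⟨u,1⟩+⟨v,1⟩)/2}`; taking logarithms is the
second formula. The first follows by expanding `(√u - √v)² = u + v - 2√(u v)`, where `√(u v)` is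
integrable because it is dominated by `u + v`.
-/

open MeasureTheory Real

theorem sqrt_density_mul_sqrt_density {ι : Type*} [Fintype ι] {K : ℝ} (hK : 0 < K) (U V : ℝ)
    {a b : ι → ℝ} (ha : ∀ j, 0 ≤ a j) (hb : ∀ j, 0 ≤ b j) :
    √(exp (-U) * ∏ j, K * a j) * √(exp (-V) * ∏ j, K * b j)
      = exp (-((U + V) / 2)) * ∏ j, K * √(a j * b j) := by
  have hab : ∀ j, 0 ≤ a j * b j := fun j => mul_nonneg (ha j) (hb j)
  have hKa : 0 ≤ ∏ j, K * a j := Finset.prod_nonneg fun j _ => mul_nonneg hK.le (ha j)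
  have hKab : 0 ≤ ∏ j, K * √(a j * b j) :=
    Finset.prod_nonneg fun j _ => mul_nonneg hK.le (sqrt_nonneg _)
  rw [← sqrt_mul (by positivity), ← sqrt_sq (mul_nonneg (exp_pos _).le hKab)]
  congr 1
  have hexp : exp (-((U + V) / 2)) ^ 2 = exp (-U) * exp (-V) := by
    rw [← exp_nat_mul, ← exp_add]
    congr 1
    push_cast
    ring
  have hprod : (∏ j, K * √(a j * b j)) ^ 2 = (∏ j, K * a j) * ∏ j, K * b j := by
    rw [← Finset.prod_pow, ← Finset.prod_mul_distrib]
    refine Finset.prod_congr rfl fun j _ => ?_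
    rw [mul_pow, sq_sqrt (hab j)]
    ring
  rw [mul_pow, hexp, hprod]
  ring

theorem integrable_sqrt_mul {α : Type*} [MeasurableSpace α] {μ : Measure α} {u v : α → ℝ}
    (hu0 : ∀ x, 0 ≤ u x) (hv0 : ∀ x, 0 ≤ v x) (hu : Integrable u μ) (hv : Integrable v μ) :
    Integrable (fun x => √(u x * v x)) μ := by
  refine (hu.add hv).mono'
    (continuous_sqrt.comp_aestronglyMeasurable
      (hu.aestronglyMeasurable.mul hv.aestronglyMeasurable)) (Filter.Eventually.of_forall fun x => ?_)
  rw [norm_of_nonneg (sqrt_nonneg _)]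
  have h1 := hu0 x
  have h2 := hv0 x
  refine sqrt_le_iff.mpr ⟨add_nonneg h1 h2, ?_⟩
  simp only [Pi.add_apply]
  nlinarith [mul_nonneg h1 h2]

/-- The Bhattacharyya coefficient `⟨√f, √g⟩_μ` of two Poisson point processes, in closed
form: there `U = ⟨u,1⟩` and `V = ⟨v,1⟩`, but the identity holds for any normalizing exponents. -/
theorem tsum_bhattacharyya_poisson {d : ℕ} {K : ℝ} (hK : 0 < K)
    {u v : (Fin d → ℝ) → ℝ} (hu0 : ∀ x, 0 ≤ u x) (hv0 : ∀ x, 0 ≤ v x) (U V : ℝ) :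
    ∑' i : ℕ, (1 / ((Nat.factorial i : ℝ) * K ^ i)) *
        ∫ x : Fin i → (Fin d → ℝ),
          √(exp (-U) * ∏ j : Fin i, K * u (x j)) * √(exp (-V) * ∏ j : Fin i, K * v (x j))
      = exp ((∫ x, √(u x * v x)) - (U + V) / 2) := by
  have hterm : ∀ i : ℕ, (1 / ((Nat.factorial i : ℝ) * K ^ i)) *
        ∫ x : Fin i → (Fin d → ℝ),
          √(exp (-U) * ∏ j : Fin i, K * u (x j)) * √(exp (-V) * ∏ j : Fin i, K * v (x j))
      = exp (-((U + V) / 2)) * ((∫ x, √(u x * v x)) ^ i / (Nat.factorial i : ℝ)) := by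
    intro i
    simp_rw [sqrt_density_mul_sqrt_density hK U V (fun j => hu0 _) (fun j => hv0 _)]
    rw [integral_const_mul,
      integral_fintype_prod_volume_eq_pow (ι := Fin i) (fun y => K * √(u y * v y)),
      integral_const_mul, Fintype.card_fin, mul_pow]
    have := Nat.factorial_ne_zero i
    field_simp
  rw [tsum_congr hterm, tsum_mul_left, sub_eq_neg_add, exp_add, exp_eq_exp_ℝ,
    NormedSpace.exp_eq_tsum_div (𝔸 := ℝ)]

/-- **Corollary 3.** The Bhattacharyya distance
`D_B = −ln ⟨√f, √g⟩_μ` between the probability distributions of two Poisson point processes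
with intensity functions `u` and `v` equals the squared Hellinger distance
`(1/2)∫(√u − √v)²` between their intensity measures, and equivalently equals
`(⟨u,1⟩ + ⟨v,1⟩)/2 − ∫√(u·v)`. -/
theorem bhattacharyya_distance_poisson
    (d : ℕ) (hd : 1 ≤ d) (K : ℝ) (hK : 0 < K)
    (u v : (Fin d → ℝ) → ℝ) (hu : Measurable u) (hv : Measurable v)
    (hu0 : ∀ x, 0 ≤ u x) (hv0 : ∀ x, 0 ≤ v x)
    (huI : Integrable u) (hvI : Integrable v) :
    (-Real.log (∑' i : ℕ, (1 / ((Nat.factorial i : ℝ) * K ^ i)) *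
        ∫ x : Fin i → (Fin d → ℝ),
          Real.sqrt (Real.exp (-∫ y : Fin d → ℝ, u y) * ∏ j : Fin i, K * u (x j)) *
          Real.sqrt (Real.exp (-∫ y : Fin d → ℝ, v y) * ∏ j : Fin i, K * v (x j)))
      = (1 / 2) * ∫ x : Fin d → ℝ, (Real.sqrt (u x) - Real.sqrt (v x)) ^ 2)
    ∧
    (-Real.log (∑' i : ℕ, (1 / ((Nat.factorial i : ℝ) * K ^ i)) *
        ∫ x : Fin i → (Fin d → ℝ),
          Real.sqrt (Real.exp (-∫ y : Fin d → ℝ, u y) * ∏ j : Fin i, K * u (x j)) *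
          Real.sqrt (Real.exp (-∫ y : Fin d → ℝ, v y) * ∏ j : Fin i, K * v (x j)))
      = ((∫ x : Fin d → ℝ, u x) + (∫ x : Fin d → ℝ, v x)) / 2
          - ∫ x : Fin d → ℝ, Real.sqrt (u x * v x)) := by
  have hsq : ∫ x, (√(u x) - √(v x)) ^ 2
      = (∫ x, u x) + (∫ x, v x) - 2 * ∫ x, √(u x * v x) := by
    have hpt : ∀ x, (√(u x) - √(v x)) ^ 2 = u x + v x - 2 * √(u x * v x) := fun x => by
      rw [sub_sq, sq_sqrt (hu0 x), sq_sqrt (hv0 x), sqrt_mul (hu0 x)]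
      ring
    simp_rw [hpt]
    have huv : Integrable (fun x => u x + v x) := huI.add hvI
    rw [integral_sub huv ((integrable_sqrt_mul hu0 hv0 huI hvI).const_mul 2),
      integral_add huI hvI, integral_const_mul]
  rw [tsum_bhattacharyya_poisson hK hu0 hv0, log_exp, hsq]
  constructor <;> ring
end

section
/- Let d ≥ 1, let w_u, w_v > 0 be real numbers, m_u, m_v ∈ ℝ^d, and let P_u, P_v be symmetric positive-definite d×d real matrices. Define the Gaussian intensity functions u(x) = w_u · N(x; m_u, P_u) and v(x) = w_v · N(x; m_v, P_v). Then (1/2) ∫_{ℝ^d} ( √(u(x)) − √(v(x)) )² dx = (w_u + w_v)/2 − √( (2π)^d · w_u · w_v · √(det P_u · det P_v) ) · N( m_u/2 ; m_v/2 , (P_u + P_v)/2 ). (The left-hand side is, by Corollary 3, the Bhattacharyya distance between the probability distributions of two Poisson point processes with intensity functions u and v.) -/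
/-!
Expanding the square, `∫ (√u - √v)² = ∫ u + ∫ v - 2 ∫ √u √v`. The first two integrals are the
weights, since a Gaussian density integrates to `1`; this is the integral
`∫ exp (-(1/2) (x - c)ᵀ A (x - c)) = √((2π)^d / det A)` (`integral_exp_quadForm`), which follows by
factoring `A = BᵀB` and substituting `y = B x`. For the cross term, completing the square
(`quadForm_add_quadForm`) turns the sum of the two quadratic forms into a single one with matrix
`P_u⁻¹ + P_v⁻¹` plus the constant `(m_v - m_u)ᵀ (P_u + P_v)⁻¹ (m_v - m_u)`, so that `√u √v` is again
an unnormalised Gaussian. Its normalising constant is computed from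
`det (P_u⁻¹ + P_v⁻¹) = det (P_u + P_v) / (det P_u det P_v)`.

Integrability of each Gaussian is deduced from its Bochner integral being nonzero.
-/

open MeasureTheory Real Matrix

lemma integral_exp_dotProduct_self (d : ℕ) :
    ∫ x : Fin d → ℝ, Real.exp (-(1 / 2) * (x ⬝ᵥ x)) = Real.sqrt ((2 * Real.pi) ^ d) := by
  have h1 : ∀ x : Fin d → ℝ,
      Real.exp (-(1 / 2) * (x ⬝ᵥ x)) = ∏ i, Real.exp (-(1 / 2) * (x i) ^ 2) := by
    intro x
    rw [← Real.exp_sum, dotProduct, Finset.mul_sum]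
    simp only [pow_two]
  simp_rw [h1]
  rw [integral_fintype_prod_volume_eq_pow (fun t : ℝ => Real.exp (-(1 / 2) * t ^ 2)),
    integral_gaussian, Fintype.card_fin]
  rw [show Real.pi / (1 / 2) = 2 * Real.pi by ring]
  symm
  rw [Real.sqrt_eq_iff_mul_self_eq (by positivity) (by positivity), ← mul_pow,
    Real.mul_self_sqrt (by positivity)]

lemma integral_comp_mulVec {d : ℕ} {B : Matrix (Fin d) (Fin d) ℝ} (hB : B.det ≠ 0)
    {f : (Fin d → ℝ) → ℝ} (hf : Continuous f) :
    ∫ x, f (B *ᵥ x) = |B.det|⁻¹ * ∫ x, f x := by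
  have hm : Measurable (Matrix.toLin' B) :=
    (LinearMap.continuous_of_finiteDimensional (Matrix.toLin' B)).measurable
  have h := integral_map (μ := volume) (f := f) hm.aemeasurable
    hf.aestronglyMeasurable
  rw [Real.map_matrix_volume_pi_eq_smul_volume_pi hB, integral_smul_measure,
    ENNReal.toReal_ofReal (abs_nonneg _), abs_inv, smul_eq_mul] at h
  simpa using h.symm

/-- The Gaussian integral for a positive-definite precision matrix `A`. -/
lemma integral_exp_quadForm {d : ℕ} {A : Matrix (Fin d) (Fin d) ℝ} (hA : A.PosDef)
    (c : Fin d → ℝ) :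
    ∫ x : Fin d → ℝ, Real.exp (-(1 / 2) * ((x - c) ⬝ᵥ (A *ᵥ (x - c))))
      = Real.sqrt ((2 * Real.pi) ^ d / A.det) := by
  rw [integral_sub_right_eq_self
    (fun x : Fin d → ℝ => Real.exp (-(1 / 2) * (x ⬝ᵥ (A *ᵥ x)))) c]
  obtain ⟨B, rfl⟩ : ∃ B : Matrix (Fin d) (Fin d) ℝ, A = Bᵀ * B := by
    open scoped MatrixOrder ComplexOrder in
    obtain ⟨B, hB⟩ := CStarAlgebra.nonneg_iff_eq_star_mul_self.mp hA.posSemidef.nonneg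
    exact ⟨B, by simpa [Matrix.star_eq_conjTranspose] using hB⟩
  have hdet := hA.det_pos
  rw [Matrix.det_mul, Matrix.det_transpose] at hdet ⊢
  have hB : B.det ≠ 0 := by
    intro h
    simp [h] at hdet
  have h1 : ∀ x : Fin d → ℝ, x ⬝ᵥ ((Bᵀ * B) *ᵥ x) = (B *ᵥ x) ⬝ᵥ (B *ᵥ x) := by
    intro x
    rw [← Matrix.mulVec_mulVec, Matrix.dotProduct_mulVec, Matrix.vecMul_transpose]
  simp_rw [h1]
  rw [integral_comp_mulVec hB (f := fun x => Real.exp (-(1 / 2) * (x ⬝ᵥ x)))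
      (by unfold dotProduct; fun_prop),
    integral_exp_dotProduct_self, Real.sqrt_div (by positivity), Real.sqrt_mul_self_eq_abs]
  ring

lemma gaussPdf_nonneg {d : ℕ} (m : Fin d → ℝ) (P : Matrix (Fin d) (Fin d) ℝ) (x : Fin d → ℝ) :
    0 ≤ gaussPdf m P x := by
  unfold gaussPdf
  positivity

lemma integral_gaussPdf {d : ℕ} (m : Fin d → ℝ) {P : Matrix (Fin d) (Fin d) ℝ} (hP : P.PosDef) :
    ∫ x, gaussPdf m P x = 1 := by
  have hdet := hP.det_pos
  unfold gaussPdf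
  rw [integral_const_mul, integral_exp_quadForm hP.inv, Matrix.det_nonsing_inv,
    Ring.inverse_eq_inv', div_inv_eq_mul]
  exact inv_mul_cancel₀ (by positivity)

/-- Completing the square. With `z = (P + Q)⁻¹ (n - m)`, the minimiser of the left-hand side is
`m + P z`. -/
lemma quadForm_add_quadForm {d : ℕ} {P Q : Matrix (Fin d) (Fin d) ℝ} (hP : P.PosDef)
    (hQ : Q.PosDef) (m n x : Fin d → ℝ) :
    (x - m) ⬝ᵥ (P⁻¹ *ᵥ (x - m)) + (x - n) ⬝ᵥ (Q⁻¹ *ᵥ (x - n))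
      = (x - (m + P *ᵥ ((P + Q)⁻¹ *ᵥ (n - m)))) ⬝ᵥ
          ((P⁻¹ + Q⁻¹) *ᵥ (x - (m + P *ᵥ ((P + Q)⁻¹ *ᵥ (n - m)))))
        + (n - m) ⬝ᵥ ((P + Q)⁻¹ *ᵥ (n - m)) := by
  have hPd : IsUnit P.det := hP.det_pos.ne'.isUnit
  have hQd : IsUnit Q.det := hQ.det_pos.ne'.isUnit
  have hPQd : IsUnit (P + Q).det := (hP.add hQ).det_pos.ne'.isUnit
  have hsymm : ∀ {R : Matrix (Fin d) (Fin d) ℝ}, R.PosDef → ∀ a b : Fin d → ℝ,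
      a ⬝ᵥ (R⁻¹ *ᵥ b) = b ⬝ᵥ (R⁻¹ *ᵥ a) := by
    intro R hR a b
    have ht : (R⁻¹)ᵀ = R⁻¹ := by simpa using hR.inv.isHermitian.eq
    rw [Matrix.dotProduct_mulVec, ← Matrix.mulVec_transpose, ht, dotProduct_comm]
  obtain ⟨z, hz⟩ : ∃ z, z = (P + Q)⁻¹ *ᵥ (n - m) := ⟨_, rfl⟩
  have hn : n = m + (P *ᵥ z + Q *ᵥ z) := by
    rw [← Matrix.add_mulVec, hz, Matrix.mulVec_mulVec, Matrix.mul_nonsing_inv _ hPQd,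
      Matrix.one_mulVec]
    abel
  rw [← hz]
  obtain ⟨y, rfl⟩ : ∃ y, x = y + (m + P *ᵥ z) := ⟨x - (m + P *ᵥ z), by abel⟩
  have e1 : y + (m + P *ᵥ z) - m = y + P *ᵥ z := by abel
  have e2 : y + (m + P *ᵥ z) - n = y - Q *ᵥ z := by rw [hn]; abel
  have e3 : y + (m + P *ᵥ z) - (m + P *ᵥ z) = y := by abel
  have e4 : n - m = P *ᵥ z + Q *ᵥ z := by rw [hn]; abel
  have i1 : P⁻¹ *ᵥ (P *ᵥ z) = z := by
    rw [Matrix.mulVec_mulVec, Matrix.nonsing_inv_mul _ hPd, Matrix.one_mulVec]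
  have i2 : Q⁻¹ *ᵥ (Q *ᵥ z) = z := by
    rw [Matrix.mulVec_mulVec, Matrix.nonsing_inv_mul _ hQd, Matrix.one_mulVec]
  have s1 := hsymm hP (P *ᵥ z) y
  have s2 := hsymm hQ (Q *ᵥ z) y
  rw [i1] at s1
  rw [i2] at s2
  rw [e1, e2, e3, e4]
  simp only [Matrix.mulVec_add, Matrix.mulVec_sub, Matrix.add_mulVec, dotProduct_add,
    add_dotProduct, dotProduct_sub, sub_dotProduct, i1, i2, s1, s2]
  ring

lemma det_inv_add_inv {d : ℕ} {P Q : Matrix (Fin d) (Fin d) ℝ} (hP : P.PosDef)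
    (hQ : Q.PosDef) : (P⁻¹ + Q⁻¹).det = (P + Q).det / (P.det * Q.det) := by
  have hPd : IsUnit P.det := hP.det_pos.ne'.isUnit
  have hQd : IsUnit Q.det := hQ.det_pos.ne'.isUnit
  have h : P⁻¹ + Q⁻¹ = P⁻¹ * (P + Q) * Q⁻¹ := by
    rw [Matrix.mul_add, Matrix.add_mul, Matrix.nonsing_inv_mul _ hPd, Matrix.one_mul,
      Matrix.mul_assoc, Matrix.mul_nonsing_inv _ hQd, Matrix.mul_one, add_comm]
  rw [h, Matrix.det_mul, Matrix.det_mul, Matrix.det_nonsing_inv, Matrix.det_nonsing_inv,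
    Ring.inverse_eq_inv']
  field_simp

/-- The normalising constants in the cross term; `T` is `(2π)^d`, `a` and `b` are the determinants
of the two covariances, `s` that of their average. -/
lemma cross_const {T wu wv a b s : ℝ} (hT : 0 < T) (hwu : 0 < wu) (hwv : 0 < wv) (ha : 0 < a)
    (hb : 0 < b) (hs : 0 < s) :
    Real.sqrt (wu * (Real.sqrt (T * a))⁻¹) * Real.sqrt (wv * (Real.sqrt (T * b))⁻¹) *
        Real.sqrt (T / (s / (a * b)))
      = Real.sqrt (T * wu * wv * Real.sqrt (a * b)) * (Real.sqrt (T * s))⁻¹ := by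
  rw [← Real.sqrt_inv (T * s), ← Real.sqrt_mul (by positivity), ← Real.sqrt_mul (by positivity),
    ← Real.sqrt_mul (by positivity)]
  congr 1
  rw [Real.sqrt_mul hT.le, Real.sqrt_mul hT.le, Real.sqrt_mul ha.le]
  have h1 := Real.sq_sqrt hT.le
  have h2 := Real.sq_sqrt ha.le
  have h3 := Real.sq_sqrt hb.le
  have p1 := Real.sqrt_pos.2 hT
  have p2 := Real.sqrt_pos.2 ha
  have p3 := Real.sqrt_pos.2 hb
  generalize Real.sqrt T = t at *
  generalize Real.sqrt a = α at *
  generalize Real.sqrt b = β at *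
  subst h1 h2 h3
  field_simp

/-- The product of the square roots of the two intensities is an unnormalised Gaussian, whose
precision is the average of the two precisions. -/
lemma sqrt_mul_sqrt_gaussPdf {d : ℕ} {wu wv : ℝ} (hwu : 0 < wu) (hwv : 0 < wv)
    (mu mv : Fin d → ℝ) {Pu Pv : Matrix (Fin d) (Fin d) ℝ} (hPu : Pu.PosDef) (hPv : Pv.PosDef)
    (x : Fin d → ℝ) :
    Real.sqrt (wu * gaussPdf mu Pu x) * Real.sqrt (wv * gaussPdf mv Pv x)
      = Real.sqrt (wu * (Real.sqrt ((2 * Real.pi) ^ d * Pu.det))⁻¹) *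
          Real.sqrt (wv * (Real.sqrt ((2 * Real.pi) ^ d * Pv.det))⁻¹) *
          Real.exp (-(1 / 4) * ((mv - mu) ⬝ᵥ ((Pu + Pv)⁻¹ *ᵥ (mv - mu)))) *
        Real.exp (-(1 / 2) * ((x - (mu + Pu *ᵥ ((Pu + Pv)⁻¹ *ᵥ (mv - mu)))) ⬝ᵥ
          (((2 : ℝ)⁻¹ • (Pu⁻¹ + Pv⁻¹)) *ᵥ (x - (mu + Pu *ᵥ ((Pu + Pv)⁻¹ *ᵥ (mv - mu))))))) := by
  have hq := quadForm_add_quadForm hPu hPv mu mv x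
  unfold gaussPdf
  rw [← mul_assoc wu, ← mul_assoc wv,
    Real.sqrt_mul (x := wu * (Real.sqrt ((2 * Real.pi) ^ d * Pu.det))⁻¹) (by positivity),
    Real.sqrt_mul (x := wv * (Real.sqrt ((2 * Real.pi) ^ d * Pv.det))⁻¹) (by positivity),
    ← Real.exp_half, ← Real.exp_half, mul_mul_mul_comm, ← Real.exp_add, mul_assoc _ (Real.exp _),
    ← Real.exp_add, Matrix.smul_mulVec, dotProduct_smul, smul_eq_mul]
  congr 2
  linarith

lemma integral_sqrt_mul_sqrt_gaussPdf {d : ℕ} {wu wv : ℝ} (hwu : 0 < wu) (hwv : 0 < wv)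
    (mu mv : Fin d → ℝ) {Pu Pv : Matrix (Fin d) (Fin d) ℝ} (hPu : Pu.PosDef) (hPv : Pv.PosDef) :
    ∫ x, Real.sqrt (wu * gaussPdf mu Pu x) * Real.sqrt (wv * gaussPdf mv Pv x)
      = Real.sqrt ((2 * Real.pi) ^ d * wu * wv * Real.sqrt (Pu.det * Pv.det)) *
          gaussPdf ((2 : ℝ)⁻¹ • mv) ((2 : ℝ)⁻¹ • (Pu + Pv)) ((2 : ℝ)⁻¹ • mu) := by
  have hS : ((2 : ℝ)⁻¹ • (Pu⁻¹ + Pv⁻¹)).PosDef := (hPu.inv.add hPv.inv).smul (by norm_num)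
  have hPQ := hPu.add hPv
  have hC : ((2 : ℝ)⁻¹ • (Pu + Pv)).PosDef := hPQ.smul (by norm_num)
  simp_rw [sqrt_mul_sqrt_gaussPdf hwu hwv mu mv hPu hPv]
  rw [integral_const_mul, integral_exp_quadForm hS]
  have hdet : ((2 : ℝ)⁻¹ • (Pu⁻¹ + Pv⁻¹)).det
      = ((2 : ℝ)⁻¹ • (Pu + Pv)).det / (Pu.det * Pv.det) := by
    rw [Matrix.det_smul, Matrix.det_smul, det_inv_add_inv hPu hPv, mul_div_assoc]
  have hexp : -(1 / 2) * (((2 : ℝ)⁻¹ • mu - (2 : ℝ)⁻¹ • mv) ⬝ᵥ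
        (((2 : ℝ)⁻¹ • (Pu + Pv))⁻¹ *ᵥ ((2 : ℝ)⁻¹ • mu - (2 : ℝ)⁻¹ • mv)))
      = -(1 / 4) * ((mv - mu) ⬝ᵥ ((Pu + Pv)⁻¹ *ᵥ (mv - mu))) := by
    have hinv : ((2 : ℝ)⁻¹ • (Pu + Pv))⁻¹ = (2 : ℝ) • (Pu + Pv)⁻¹ := by
      apply Matrix.inv_eq_left_inv
      rw [Matrix.smul_mul, Matrix.mul_smul, smul_smul,
        Matrix.nonsing_inv_mul _ hPQ.det_pos.ne'.isUnit]
      norm_num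
    rw [hinv, ← smul_sub, ← neg_sub mv mu]
    simp only [Matrix.smul_mulVec, Matrix.mulVec_smul, Matrix.mulVec_neg, dotProduct_smul,
      smul_dotProduct, smul_neg, neg_dotProduct, dotProduct_neg, smul_eq_mul]
    ring
  unfold gaussPdf
  rw [hexp, hdet, ← mul_assoc, ← cross_const (by positivity) hwu hwv hPu.det_pos hPv.det_pos
    hC.det_pos]
  ring

/-- **Corollary 4.** Closed form for the Bhattacharyya distance (the squared
Hellinger distance between the intensity measures) between two Poisson point processes with
Gaussian intensities `u = w_u·N(·; m_u, P_u)` and `v = w_v·N(·; m_v, P_v)`. -/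
theorem bhattacharyya_distance_gaussianIntensities
    (d : ℕ) (hd : 1 ≤ d)
    (wu wv : ℝ) (hwu : 0 < wu) (hwv : 0 < wv)
    (mu mv : Fin d → ℝ)
    (Pu Pv : Matrix (Fin d) (Fin d) ℝ) (hPu : Pu.PosDef) (hPv : Pv.PosDef) :
    (1 / 2) * ∫ x : Fin d → ℝ,
        (Real.sqrt (wu * gaussPdf mu Pu x) - Real.sqrt (wv * gaussPdf mv Pv x)) ^ 2
      = (wu + wv) / 2
        - Real.sqrt ((2 * Real.pi) ^ d * wu * wv * Real.sqrt (Pu.det * Pv.det)) *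
            gaussPdf ((2 : ℝ)⁻¹ • mv) ((2 : ℝ)⁻¹ • (Pu + Pv)) ((2 : ℝ)⁻¹ • mu) := by
  have hcross := integral_sqrt_mul_sqrt_gaussPdf hwu hwv mu mv hPu hPv
  have hiu : Integrable (fun x => wu * gaussPdf mu Pu x) :=
    (Integrable.of_integral_ne_zero (by rw [integral_gaussPdf mu hPu]; exact one_ne_zero)).const_mul
      wu
  have hiv : Integrable (fun x => wv * gaussPdf mv Pv x) :=
    (Integrable.of_integral_ne_zero (by rw [integral_gaussPdf mv hPv]; exact one_ne_zero)).const_mul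
      wv
  have hic : Integrable
      (fun x => Real.sqrt (wu * gaussPdf mu Pu x) * Real.sqrt (wv * gaussPdf mv Pv x)) := by
    apply Integrable.of_integral_ne_zero
    rw [hcross]
    have h1 := hPu.det_pos
    have h2 := hPv.det_pos
    have h3 : 0 < ((2 : ℝ)⁻¹ • (Pu + Pv)).det := ((hPu.add hPv).smul (by norm_num)).det_pos
    unfold gaussPdf
    positivity
  have hexpand : ∀ x,
      (Real.sqrt (wu * gaussPdf mu Pu x) - Real.sqrt (wv * gaussPdf mv Pv x)) ^ 2
        = wu * gaussPdf mu Pu x + wv * gaussPdf mv Pv x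
          - 2 * (Real.sqrt (wu * gaussPdf mu Pu x) * Real.sqrt (wv * gaussPdf mv Pv x)) := by
    intro x
    rw [sub_sq, Real.sq_sqrt (mul_nonneg hwu.le (gaussPdf_nonneg _ _ _)),
      Real.sq_sqrt (mul_nonneg hwv.le (gaussPdf_nonneg _ _ _))]
    ring
  simp_rw [hexpand]
  rw [integral_sub (hiu.fun_add hiv) (hic.const_mul 2), integral_add hiu hiv, integral_const_mul,
    integral_const_mul, integral_const_mul, hcross, integral_gaussPdf mu hPu,
    integral_gaussPdf mv hPv]
  ring
end
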